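/- Let P be a graded poset and let x < y < w be three elements of P. Then for any element z ∈ P ∪ {−1̂} with z < w, the relation [x,y] <_{T(P)} [z,w] holds in the Tchebyshev transform T(P) if and only if z = x or y ≤ z < w. -/

import Mathlib

open scoped TensorProduct

noncomputable section

namespace Tcheb

/-! ### The algebra `R⟨a,b⟩` of ab-polynomials -/

/-- Words in the two noncommuting letters `a` (encoded `true`) and `b` (encoded `false`). -/
abbrev ABWord : Type := FreeMonoid Bool

/-- The ring `R⟨a,b⟩` of polynomials in two noncommuting variables `a` and `b`. -/
abbrev AB (R : Type) [CommRing R] : Type := MonoidAlgebra R ABWord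

variable (R : Type) [CommRing R]

/-- The ab-monomial corresponding to a word. -/
def word (l : List Bool) : AB R := MonoidAlgebra.of R ABWord (FreeMonoid.ofList l)

/-- The variable `a`. -/
def av : AB R := word R [true]
/-- The variable `b`. -/
def bv : AB R := word R [false]
/-- `c = a + b`. -/
def cv : AB R := av R + bv R
/-- `d = ab + ba`. -/
def dv : AB R := av R * bv R + bv R * av R
/-- `a - b`. -/
def ev : AB R := av R - bv R

/-- The linear map defined by prescribing values on the basis of ab-monomials. -/
def onBasis {M : Type} [AddCommMonoid M] [Module R M] (f : List Bool → M) :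
    AB R →ₗ[R] M :=
  (Finsupp.lift M R ABWord fun w => f (FreeMonoid.toList w)) ∘ₗ
    (MonoidAlgebra.coeffLinearEquiv R : AB R ≃ₗ[R] (ABWord →₀ R)).toLinearMap

/-- The algebra map `A` with `A(a) = 1`, `A(b) = 0`. -/
def Amap : AB R →ₐ[R] R :=
  MonoidAlgebra.lift R R ABWord (FreeMonoid.lift fun x => if x then (1 : R) else 0)

/-- The coproduct on `R⟨a,b⟩`: on an ab-monomial `u₁ ⋯ u_k` it is
`Σ_{i=1}^k u₁ ⋯ u_{i-1} ⊗ u_{i+1} ⋯ u_k`. -/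
def Delta : AB R →ₗ[R] AB R ⊗[R] AB R :=
  onBasis R fun w => ∑ i ∈ Finset.range w.length,
    word R (w.take i) ⊗ₜ[R] word R (w.drop (i + 1))

/-- The linear map `C(u) = 2·A(u) + Σ_u A(u₍₁₎)·A(u₍₂₎)`. -/
def Cmap : AB R →ₗ[R] R :=
  2 • (Amap R).toLinearMap +
    (LinearMap.mul' R R ∘ₗ
      TensorProduct.map (Amap R).toLinearMap (Amap R).toLinearMap) ∘ₗ Delta R

/-- `κ(u) = A(u)·(a-b)^(deg u)` on homogeneous `u`, extended linearly. -/
def kappa : AB R →ₗ[R] AB R :=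
  onBasis R fun w => Amap R (word R w) • ev R ^ w.length

/-- `ν(u) = C(u)·(a-b)^(deg u)` on homogeneous `u`, extended linearly. -/
def nuMap : AB R →ₗ[R] AB R :=
  onBasis R fun w => Cmap R (word R w) • ev R ^ w.length

end Tcheb

namespace Tcheb

/-- Cutting a word into the list of segments between the (sorted) cut positions. -/
def segments : List Bool → List ℕ → List (List Bool)
  | l, [] => [l]
  | l, i :: rest => l.take i :: segments (l.drop (i + 1)) (rest.map fun j => j - (i + 1))
  termination_by _ cuts => cuts.length
  decreasing_by simp

variable (R : Type) [CommRing R]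

/-- For segments `[s₁, …, s_k]` this is `ν(s₁)·b·ν(s₂)·b ⋯ b·ν(s_{k-1})·b·κ(s_k)`. -/
def chainProd : List (List Bool) → AB R
  | [] => 1
  | [s] => kappa R (word R s)
  | s :: rest => nuMap R (word R s) * bv R * chainProd rest

/-- The Tchebyshev transform (of the first kind) on ab-polynomials:
`T(u) = Σ_{k ≥ 1} Σ_u ν(u₍₁₎)·b·ν(u₍₂₎)·b ⋯ b·ν(u₍ₖ₋₁₎)·b·κ(u₍ₖ₎)`,
where the inner sum is over the `k`-fold coproduct.  On the ab-monomial basis this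
is the sum, over all sets of positions of deleted letters, of the corresponding
products over the resulting segments. -/
def Tmap : AB R →ₗ[R] AB R :=
  onBasis R fun w => ∑ S : Finset (Fin w.length),
    chainProd R (segments w ((S.sort (· ≤ ·)).map Fin.val))

/-- The `ω` map on a word: replace each occurrence of `ab` by `2d` and all
remaining letters by `c`. -/
def omegaWord : List Bool → AB R
  | [] => 1
  | true :: false :: rest => (2 * dv R) * omegaWord rest
  | _ :: rest => cv R * omegaWord rest

/-- The `ω` map of Billera–Ehrenborg–Readdy. -/
def omegaMap : AB R →ₗ[R] AB R := onBasis R fun w => omegaWord R w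

/-- The reversal involution `u ↦ u*` of ab-polynomials. -/
def revMap : AB R →ₗ[R] AB R := onBasis R fun w => word R w.reverse

/-- `H*(1) = 0` and `H*(u·a) = H*(u·b) = u`. -/
def Hstar : AB R →ₗ[R] AB R :=
  onBasis R fun w => if w = [] then 0 else word R w.dropLast

/-- The Tchebyshev transform of the second kind `U(u) = H*(T(u·a))`. -/
def Umap : AB R →ₗ[R] AB R := Hstar R ∘ₗ Tmap R ∘ₗ LinearMap.mulRight R (av R)

/-- `σ(u) = Σ_u κ(u₍₁₎)·b·T(u₍₂₎)`. -/
def sigmaMap : AB R →ₗ[R] AB R :=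
  LinearMap.mul' R (AB R) ∘ₗ
    TensorProduct.map (LinearMap.mulRight R (bv R) ∘ₗ kappa R) (Tmap R) ∘ₗ Delta R

/-! ### Graded posets and the ab-index -/

/-- `rk` is a rank function for a bounded poset: `rk ⊥ = 0` and covers raise rank by one. -/
def IsRankFun (α : Type) [PartialOrder α] [OrderBot α] (rk : α → ℕ) : Prop :=
  rk ⊥ = 0 ∧ ∀ x y : α, x ⋖ y → rk y = rk x + 1

/-- `f` lists the elements of a chain in increasing order with respect to the
strict order relation `lt`. -/
def IsStrictChain {α : Type} (lt : α → α → Prop) {n : ℕ} (f : Fin (n + 1) → α) : Prop :=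
  ∀ i j : Fin (n + 1), i < j → lt (f i) (f j)

/-- The weight of a chain `x₀ < x₁ < ⋯ < x_k`:
`(a-b)^{ρ(x₀,x₁)-1}·b·(a-b)^{ρ(x₁,x₂)-1}·b ⋯ b·(a-b)^{ρ(x_{k-1},x_k)-1}`. -/
def chainWt {α : Type} (rk : α → ℕ) {n : ℕ} (f : Fin (n + 1) → α) : AB R :=
  (List.intersperse (bv R)
    (List.ofFn fun i : Fin n => ev R ^ (rk (f i.succ) - rk (f i.castSucc) - 1))).prod

/-- The ab-index `Ψ` of the graded poset with strict order relation `lt`, rank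
function `rk`, minimum `b` and maximum `t`: the sum of the weights of all chains
from `b` to `t`. -/
def PsiRel {α : Type} (lt : α → α → Prop) (rk : α → ℕ) (b t : α) : AB R :=
  ∑ᶠ (n : ℕ), ∑ᶠ (f : Fin (n + 1) → α)
    (_ : IsStrictChain lt f ∧ f 0 = b ∧ f (Fin.last n) = t), chainWt R rk f

end Tcheb

namespace Tcheb

/-! ### The Tchebyshev transform of a graded poset -/

section TPoset

variable (α : Type) [PartialOrder α] [BoundedOrder α]

/-- The elements `[x,y]` of the Tchebyshev transform: intervals of `P ∪ {-1̂}`,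
i.e. pairs `(x,y)` with `x ∈ P ∪ {-1̂}`, `y ∈ P` and `x < y`. -/
def TPel : Type := {p : WithBot α × α // p.1 < (p.2 : WithBot α)}

/-- The underlying set of the Tchebyshev transform `T(P)`: the intervals `[x,y]`
together with a new maximum element (`none`). -/
def TP : Type := Option (TPel α)

/-- The cover relation of the Tchebyshev transform `T(P)`:
`[x,y] ⋖ [y,w]` and `[x,y] ⋖ [x,w]` whenever `y ⋖ w` in `P`, and `[x,1̂] ⋖ 1̂_{T(P)}`. -/
inductive TPcov : TP α → TP α → Prop
  | up {x : WithBot α} {y w : α} (h1 : x < (y : WithBot α))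
      (h2 : (y : WithBot α) < (w : WithBot α)) (hc : y ⋖ w) :
      TPcov (some ⟨(x, y), h1⟩) (some ⟨((y : WithBot α), w), h2⟩)
  | same {x : WithBot α} {y w : α} (h1 : x < (y : WithBot α))
      (h2 : x < (w : WithBot α)) (hc : y ⋖ w) :
      TPcov (some ⟨(x, y), h1⟩) (some ⟨(x, w), h2⟩)
  | top {x : WithBot α} (h1 : x < ((⊤ : α) : WithBot α)) :
      TPcov (some ⟨(x, (⊤ : α)), h1⟩) none

/-- The strict order relation of `T(P)`, generated by the cover relation. -/
def TPlt : TP α → TP α → Prop := Relation.TransGen (TPcov α)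

/-- The order relation of `T(P)`, generated by the cover relation. -/
def TPle : TP α → TP α → Prop := Relation.ReflTransGen (TPcov α)

/-- The minimum element `[-1̂, 0̂]` of `T(P)`. -/
def TPbot : TP α := some ⟨((⊥ : WithBot α), (⊥ : α)), WithBot.bot_lt_coe _⟩

/-- The maximum element `1̂_{T(P)}` of `T(P)`. -/
def TPtop : TP α := none

/-- The rank function of `T(P)`: `ρ([x,y]) = ρ(y)` and `ρ(1̂_{T(P)}) = ρ(P) + 1`. -/
def TPrk (rk : α → ℕ) : TP α → ℕ
  | some p => rk p.1.2
  | none => rk (⊤ : α) + 1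

theorem TPbot_ne_TPtop : TPbot α ≠ TPtop α := Option.some_ne_none _

/-- The map `z : T(P) → P ∪ {2̂}` with `z([x,y]) = y` and `z(1̂_{T(P)}) = 2̂`. -/
def zmap : TP α → WithTop α
  | some p => (p.1.2 : WithTop α)
  | none => ⊤

/-- The number of elements of the interval `[u,v]` of `P`, for `u, v ∈ P ∪ {2̂}`. -/
def intervalCard (u v : WithTop α) : ℕ :=
  Set.ncard {t : α | u ≤ (t : WithTop α) ∧ (t : WithTop α) ≤ v}

end TPoset

/-! ### The dual diamond product -/

/-- The strict order relation of the dual diamond product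
`P ◇* Q = ((P ∖ {1̂}) × (Q ∖ {1̂})) ∪ {1̂}` (with `none` the new maximum), built from
the order relations `leA, ltA` and `leB, ltB` of the two factors. -/
def dsLT {A B : Type} (leA ltA : A → A → Prop) (leB ltB : B → B → Prop) :
    Option (A × B) → Option (A × B) → Prop
  | some p, some q => (leA p.1 q.1 ∧ leB p.2 q.2) ∧ (ltA p.1 q.1 ∨ ltB p.2 q.2)
  | some _, none => True
  | none, _ => False

/-! ### EL-labelings -/

/-- The list of edge labels along a chain (given as a list of poset elements). -/
def labelsList {α Λ : Type} (lam : α → α → Λ) (l : List α) : List Λ :=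
  (l.zip l.tail).map fun p => lam p.1 p.2

/-- `l` is a maximal (saturated) chain of the interval `[x,y]` with respect to the
cover relation `cov`: it runs from `x` to `y` and every step is a cover. -/
def IsMaxChainList {α : Type} (cov : α → α → Prop) (x y : α) (l : List α) : Prop :=
  l.head? = some x ∧ l.getLast? = some y ∧ l.Chain' cov

/-- An `EL`-labeling of the poset whose cover relation is `cov`, with labels in the
linearly ordered set `(Λ, lle, llt)`: every interval has a unique rising maximal
chain, which moreover is lexicographically least among all maximal chains of the
interval. -/
def IsELLabeling (α Λ : Type) (lle llt : Λ → Λ → Prop)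
    (cov : α → α → Prop) (lam : α → α → Λ) : Prop :=
  ∀ x y : α, Relation.ReflTransGen cov x y →
    ∃ l : List α, (IsMaxChainList cov x y l ∧ (labelsList lam l).Chain' lle) ∧
      (∀ l' : List α, IsMaxChainList cov x y l' →
        (labelsList lam l').Chain' lle → l' = l) ∧
      (∀ l' : List α, IsMaxChainList cov x y l' →
        labelsList lam l = labelsList lam l' ∨
          List.Lex llt (labelsList lam l) (labelsList lam l'))

/-! ### Eulerian posets -/

/-- A graded poset is Eulerian if every nontrivial interval `[x,y]` has the
same number of elements of even rank as of odd rank. -/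
def IsEulerian (α : Type) [PartialOrder α] (rk : α → ℕ) : Prop :=
  ∀ x y : α, x < y →
    Set.ncard {z : α | x ≤ z ∧ z ≤ y ∧ Even (rk z)} =
      Set.ncard {z : α | x ≤ z ∧ z ≤ y ∧ ¬ Even (rk z)}

/-! ### The face lattice of the crosspolytope -/

/-- A face of the `n`-dimensional crosspolytope: a partial sign vector, i.e. the
pair `(S, ε)` of a subset `S ⊆ {1,…,n}` (the set of coordinates where the function
takes a value `some`) together with a sign function `ε` on `S`. -/
def CrossEl (n : ℕ) : Type := Fin n → Option Bool

/-- `(S,ε) ≤ (T,δ)` iff `S ⊆ T` and `δ` restricted to `S` is `ε`. -/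
instance (n : ℕ) : PartialOrder (CrossEl n) where
  le f g := ∀ i s, f i = some s → g i = some s
  le_refl f i s h := h
  le_trans f g h fg gh i s hi := gh i s (fg i s hi)
  le_antisymm f g fg gf := by
    funext i
    cases hf : f i with
    | some s => exact (fg i s hf).symm
    | none =>
      cases hg : g i with
      | some s => exact absurd (gf i s hg) (by simp [hf])
      | none => rfl

/-- The face lattice of the `n`-dimensional crosspolytope: all partial sign
vectors together with a new maximum element. -/
abbrev Cross (n : ℕ) : Type := WithTop (CrossEl n)

/-- The rank function of the face lattice of the crosspolytope:
`ρ(S,ε) = |S|` and the maximum has rank `n + 1`. -/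
def crossRk (n : ℕ) : Cross n → ℕ
  | none => n + 1
  | some f => (Finset.univ.filter fun i : Fin n => (f i).isSome).card

/-- The minimal element (the empty face) of the crosspolytope face lattice. -/
def crossBot (n : ℕ) : Cross n := WithTop.some (fun _ => none)

/-- The maximal element of the crosspolytope face lattice. -/
def crossTop (n : ℕ) : Cross n := ⊤

/-! ### Quasisymmetric functions -/

/-- The monomial quasisymmetric function `M_{(p₁,…,p_k)}`, as a formal power
series in the countably many commuting variables `t₁, t₂, …` (indexed by `ℕ`). -/
def MQ (R : Type) [CommRing R] (ps : List ℕ) : MvPowerSeries ℕ R :=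
  fun m => if ((m.support.sort (· ≤ ·)).map fun i => m i) = ps then 1 else 0

/-- The `t`-part of a monomial in the variables `s` (index `none`) and
`t₁, t₂, …` (indices `some i`). -/
def tpart (m : Option ℕ →₀ ℕ) : ℕ →₀ ℕ :=
  Finsupp.comapDomain some m (Option.some_injective ℕ).injOn

/-- The type B monomial quasisymmetric function `s^p · M_{(p₁,…,p_k)}`, a formal
power series in the variables `s` (index `none`) and `t₁, t₂, …` (indices `some i`). -/
def MB (R : Type) [CommRing R] (p : ℕ) (ps : List ℕ) : MvPowerSeries (Option ℕ) R :=
  fun m => if m none = p ∧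
      (((tpart m).support.sort (· ≤ ·)).map fun i => tpart m i) = ps then 1 else 0

/-- The quasisymmetric function `F(P)` of the graded poset with strict order
relation `lt`, rank function `rk`, minimum `b` and maximum `t`:
`F(P) = Σ_c M_{(ρ(x₀,x₁),…,ρ(x_{k-1},x_k))}` over all chains `c` from `b` to `t`. -/
def FQ (R : Type) [CommRing R] {α : Type} (lt : α → α → Prop) (rk : α → ℕ)
    (b t : α) : MvPowerSeries ℕ R :=
  ∑ᶠ (n : ℕ), ∑ᶠ (f : Fin (n + 1) → α)
    (_ : IsStrictChain lt f ∧ f 0 = b ∧ f (Fin.last n) = t),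
    MQ R (List.ofFn fun i : Fin n => rk (f i.succ) - rk (f i.castSucc))

/-- The type B quasisymmetric function `F_B(P) = Σ_{0̂ < x ≤ 1̂} s^{ρ(x)-1}·F([x,1̂])`,
written as a sum over all chains `0̂ < x₀ < x₁ < ⋯ < x_k = 1̂` of
`s^{ρ(x₀)-1}·M_{(ρ(x₀,x₁),…,ρ(x_{k-1},x_k))}`. -/
def FB (R : Type) [CommRing R] {α : Type} (lt : α → α → Prop) (rk : α → ℕ)
    (b t : α) : MvPowerSeries (Option ℕ) R :=
  ∑ᶠ (n : ℕ), ∑ᶠ (f : Fin (n + 1) → α)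
    (_ : IsStrictChain lt f ∧ lt b (f 0) ∧ f (Fin.last n) = t),
    MB R (rk (f 0) - 1) (List.ofFn fun i : Fin n => rk (f i.succ) - rk (f i.castSucc))

/-! ### Characters and the chain maps -/

/-- A character on `k⟨a,b⟩`: a linear functional which is multiplicative with
respect to Cartesian products of graded posets (of rank at least 1). -/
def IsCharacter (k : Type) [Field k] (G : AB k →ₗ[k] k) : Prop :=
  ∀ (α β : Type) [Fintype α] [Fintype β] [PartialOrder α] [PartialOrder β]
    [BoundedOrder α] [BoundedOrder β], ∀ (rkα : α → ℕ) (rkβ : β → ℕ),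
    IsRankFun α rkα → IsRankFun β rkβ → 1 ≤ rkα ⊤ → 1 ≤ rkβ ⊤ →
    G (PsiRel k (· < ·) (fun p : α × β => rkα p.1 + rkβ p.2)
        ((⊥ : α), (⊥ : β)) ((⊤ : α), (⊤ : β))) =
      G (PsiRel k (· < ·) rkα ⊥ ⊤) * G (PsiRel k (· < ·) rkβ ⊥ ⊤)

/-- The quasisymmetric function image `g̃F(P)` of the chain map of the second kind:
`Σ_c G(Ψ([x₀,x₁])) ⋯ G(Ψ([x_{k-1},x_k])) · M_{(ρ(x₀,x₁),…,ρ(x_{k-1},x_k))}`,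
summed over all chains `c = {b = x₀ < ⋯ < x_k = t}`. -/
def gtF (k : Type) [Field k] (G : AB k →ₗ[k] k) {α : Type} (lt : α → α → Prop)
    (rk : α → ℕ) (b t : α) : MvPowerSeries ℕ k :=
  ∑ᶠ (n : ℕ), ∑ᶠ (f : Fin (n + 1) → α)
    (_ : IsStrictChain lt f ∧ f 0 = b ∧ f (Fin.last n) = t),
    (∏ i : Fin n, G (PsiRel k lt rk (f i.castSucc) (f i.succ))) •
      MQ k (List.ofFn fun i : Fin n => rk (f i.succ) - rk (f i.castSucc))

/-- The type B quasisymmetric function image `gF_B(P) = Σ_{0̂ < x ≤ 1̂}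
s^{ρ(x)-1}·g̃F([x,1̂])` of the chain map of the first kind, written as a sum over
all chains `0̂ < x₀ < ⋯ < x_k = 1̂`. -/
def gFB (k : Type) [Field k] (G : AB k →ₗ[k] k) {α : Type} (lt : α → α → Prop)
    (rk : α → ℕ) (b t : α) : MvPowerSeries (Option ℕ) k :=
  ∑ᶠ (n : ℕ), ∑ᶠ (f : Fin (n + 1) → α)
    (_ : IsStrictChain lt f ∧ lt b (f 0) ∧ f (Fin.last n) = t),
    (∏ i : Fin n, G (PsiRel k lt rk (f i.castSucc) (f i.succ))) •
      MB k (rk (f 0) - 1) (List.ofFn fun i : Fin n => rk (f i.succ) - rk (f i.castSucc))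

/-- The space of homogeneous ab-polynomials of degree `n`. -/
def ABhomog (k : Type) [Field k] (n : ℕ) : Submodule k (AB k) :=
  Submodule.span k {x : AB k | ∃ w : List Bool, w.length = n ∧ x = word k w}

/-! Both coordinates of an interval can only grow along a cover of `T(P)`, and the left one changes
only by jumping to the current right end. So once the left end of an interval above `[x, y]` has
moved away from `x`, it is at least `y`. Conversely, `[z, w]` with `y ≤ z` is reached by first
raising `[x, y]` to `[x, z]`, then jumping to the left end `z` in the first of the steps from `z`
to `w`. -/

section StrictOrder

open Relation

theorem transGen_covBy_of_lt_of_finite {β : Type*} [Preorder β] [Finite β] {a b : β} (h : a < b) :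
    TransGen (· ⋖ ·) a b := by
  classical
  have := Fintype.ofFinite β
  let : LocallyFiniteOrder β := Fintype.toLocallyFiniteOrder
  exact transGen_covBy_of_lt h

variable {α : Type} [PartialOrder α]

/-- The strict order of `T(P)` described directly on intervals, without reference to chains of
covers. It is defined on all of `T(P)`, including the maximum `none`, so that it can be compared
with the transitive closure of the cover relation. -/
def IntervalLT : TP α → TP α → Prop
  | some p, some q => p.1.2 < q.1.2 ∧ (q.1.1 = p.1.1 ∨ (p.1.2 : WithBot α) ≤ q.1.1)
  | some _, none => True
  | none, _ => False

theorem IntervalLT.trans {p q r : TP α} (hpq : IntervalLT p q) (hqr : IntervalLT q r) :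
    IntervalLT p r := by
  match p, q, r, hpq, hqr with
  | some _, some _, some _, ⟨hpq, hleft⟩, ⟨hqr, hleft'⟩ =>
    refine ⟨hpq.trans hqr, ?_⟩
    rcases hleft' with heq | hle
    · rwa [heq]
    · exact .inr ((WithBot.coe_lt_coe.2 hpq).le.trans hle)
  | some _, some _, none, _, _ => trivial

variable [BoundedOrder α] {x z : WithBot α} {y w : α}

theorem TPcov.intervalLT {p q : TP α} (h : TPcov α p q) : IntervalLT p q := by
  cases h with
  | up _ _ hyw => exact ⟨hyw.lt, .inr le_rfl⟩
  | same _ _ hyw => exact ⟨hyw.lt, .inl rfl⟩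
  | top => trivial

theorem TPlt.intervalLT {p q : TP α} (h : TPlt α p q) : IntervalLT p q :=
  h.trans_induction_on TPcov.intervalLT fun _ _ => IntervalLT.trans

theorem TPle_same_left_of_reflTransGen_covBy (h : ReflTransGen (· ⋖ ·) y w) (hxy : x < y)
    (hxw : x < w) : TPle α (some ⟨(x, y), hxy⟩) (some ⟨(x, w), hxw⟩) := by
  induction h using ReflTransGen.head_induction_on with
  | refl => exact .refl
  | head hcov _ ih =>
    have hxv := hxy.trans (WithBot.coe_lt_coe.2 hcov.lt)
    exact .head (.same hxy hxv hcov) (ih hxv)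

theorem TPlt_same_left_of_transGen_covBy (h : TransGen (· ⋖ ·) y w) (hxy : x < y)
    (hxw : x < w) : TPlt α (some ⟨(x, y), hxy⟩) (some ⟨(x, w), hxw⟩) := by
  obtain ⟨v, hyv, hvw⟩ := TransGen.head'_iff.1 h
  have hxv := hxy.trans (WithBot.coe_lt_coe.2 hyv.lt)
  exact .head' (.same hxy hxv hyv) (TPle_same_left_of_reflTransGen_covBy hvw hxv hxw)

theorem TPlt_left_eq_right_of_transGen_covBy (h : TransGen (· ⋖ ·) y w) (hxy : x < y)
    (hyw : (y : WithBot α) < w) : TPlt α (some ⟨(x, y), hxy⟩) (some ⟨(y, w), hyw⟩) := by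
  obtain ⟨v, hyv, hvw⟩ := TransGen.head'_iff.1 h
  have hyv' := WithBot.coe_lt_coe.2 hyv.lt
  exact .head' (.up hxy hyv' hyv) (TPle_same_left_of_reflTransGen_covBy hvw hyv' hyw)

theorem tchebyshev_order_characterization_general
    (hcov : ∀ ⦃a b : α⦄, a < b → TransGen (· ⋖ ·) a b) (hxy : x < y) (hzw : z < w) :
    TPlt α (some ⟨(x, y), hxy⟩) (some ⟨(z, w), hzw⟩) ↔ y < w ∧ (z = x ∨ (y : WithBot α) ≤ z) := by
  refine ⟨TPlt.intervalLT, ?_⟩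
  rintro ⟨hyw, rfl | hyz⟩
  · exact TPlt_same_left_of_transGen_covBy (hcov hyw) hxy hzw
  · obtain ⟨v, rfl, hyv⟩ := WithBot.coe_le_iff.1 hyz
    have hvw := hcov (WithBot.coe_lt_coe.1 hzw)
    rcases hyv.eq_or_lt with rfl | hyv
    · exact TPlt_left_eq_right_of_transGen_covBy hvw hxy hzw
    · have hxv := hxy.trans (WithBot.coe_lt_coe.2 hyv)
      exact (TPlt_same_left_of_transGen_covBy (hcov hyv) hxy hxv).trans
        (TPlt_left_eq_right_of_transGen_covBy hvw hxv hzw)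

end StrictOrder

theorem tchebyshev_order_characterization
    (α : Type) [Fintype α] [PartialOrder α] [BoundedOrder α]
    (rk : α → ℕ) (hrk : IsRankFun α rk)
    (x y w : α) (hxy : x < y) (hyw : y < w)
    (z : WithBot α) (hzw : z < (w : WithBot α)) :
    TPlt α (some ⟨((x : WithBot α), y), WithBot.coe_lt_coe.2 hxy⟩)
        (some ⟨(z, w), hzw⟩) ↔
      z = (x : WithBot α) ∨ ((y : WithBot α) ≤ z ∧ z < (w : WithBot α)) := by
  simpa only [hyw, hzw, true_and, and_true] using tchebyshev_order_characterization_general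
    (fun _ _ => transGen_covBy_of_lt_of_finite) (WithBot.coe_lt_coe.2 hxy) hzw

end Tcheb
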